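/- arXiv:1006.3542 — 5 statements merged into one kernel-verified Lean document; each statement's English description precedes it below -/
import Mathlib

section
/- Suppose f is differentiable on an open set U ⊆ (0,∞), and let P = (p₁,…,p_m) ∈ (ℝ²)^m be a configuration such that for every barycenter b ∈ B the index i(b) minimizing ‖b − p_i‖ is unique, p_{i(b)} ≠ b, and ‖b − p_{i(b)}‖ ∈ U. Then H is differentiable at P, and for each h ∈ {1,…,m} the partial gradient with respect to p_h is ∂H/∂p_h = Σ_{b : i(b) = h} φ_b · f′(‖b − p_h‖) · (p_h − b)/‖b − p_h‖. -/
/-!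
STATEMENT 1: If `f` is differentiable on an open set `U ⊆ (0,∞)` and at the
configuration `P` every barycenter `b ∈ B` has a unique nearest sensor `ι b`,
with `P (ι b) ≠ b` and `‖b − P (ι b)‖ ∈ U`, then the multi-center function
`H(P) = Σ_{b∈B} f(dist(b,P)) φ_b` is differentiable at `P` and its partial
gradient with respect to `p_h` is
`Σ_{b : ι b = h} φ_b · f′(‖b − p_h‖) · (p_h − b)/‖b − p_h‖`.
-/

noncomputable abbrev E2 : Type := EuclideanSpace ℝ (Fin 2)

theorem aux_eventually {m : ℕ} (P : Fin m → E2) (b : E2) (i₀ : Fin m)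
    (hmin : ∀ j, ‖b - P i₀‖ ≤ ‖b - P j‖)
    (huniq : ∀ j, (∀ k, ‖b - P j‖ ≤ ‖b - P k‖) → j = i₀) :
    ∀ᶠ Q in nhds P, (⨅ i, ‖b - Q i‖) = ‖b - Q i₀‖ := by
  have h1 : ∀ j, ∀ᶠ Q in nhds P, ‖b - Q i₀‖ ≤ ‖b - Q j‖ := by
    intro j
    by_cases hj : j = i₀
    · subst hj; simp
    · have hlt : ‖b - P i₀‖ < ‖b - P j‖ := by
        refine lt_of_le_of_ne (hmin j) fun he => hj (huniq j fun k => ?_)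
        rw [← he]; exact hmin k
      have hc1 : ContinuousAt (fun Q : Fin m → E2 => ‖b - Q i₀‖) P :=
        (continuous_const.sub (continuous_apply i₀)).norm.continuousAt
      have hc2 : ContinuousAt (fun Q : Fin m → E2 => ‖b - Q j‖) P :=
        (continuous_const.sub (continuous_apply j)).norm.continuousAt
      exact (hc1.eventually_lt hc2 hlt).mono fun _ h => h.le
  filter_upwards [Filter.eventually_all.2 h1] with Q hQ
  haveI : Nonempty (Fin m) := ⟨i₀⟩
  exact le_antisymm (ciInf_le (Set.finite_range _).bddBelow i₀) (le_ciInf hQ)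

theorem aux_grad (f : ℝ → ℝ) (b q : E2) (hne : q ≠ b) (c : ℝ)
    (hf : DifferentiableAt ℝ f ‖b - q‖) :
    HasGradientAt (fun q : E2 => f ‖b - q‖ * c)
      ((c * deriv f ‖b - q‖ / ‖b - q‖) • (q - b)) q := by
  have hpos : 0 < ‖b - q‖ := norm_pos_iff.2 (sub_ne_zero.2 hne.symm)
  have h1 : HasFDerivAt (fun q : E2 => b - q) (-(ContinuousLinearMap.id ℝ E2)) q :=
    (hasFDerivAt_id q).const_sub b
  have h2 := h1.norm_sq
  have h3 := h2.sqrt (by positivity)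
  have h4 := h3
  simp only [Real.sqrt_sq (norm_nonneg _)] at h4
  have h5 := (hf.hasDerivAt.comp_hasFDerivAt q h4).mul_const c
  rw [hasGradientAt_iff_hasFDerivAt]
  refine h5.congr_fderiv ?_
  ext v
  simp [inner_smul_left, inner_sub_left]
  field_simp

theorem multicenter_collapsed_gradient
    (B : Finset E2) (hB : B.Nonempty)
    (φ : E2 → ℝ) (hφ : ∀ b ∈ B, 0 ≤ φ b)
    (f : ℝ → ℝ) (U : Set ℝ) (hUopen : IsOpen U) (hUpos : U ⊆ Set.Ioi 0)
    (hf : DifferentiableOn ℝ f U)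
    (m : ℕ) (hm : 0 < m) (P : Fin m → E2)
    (ι : E2 → Fin m)
    (hmin : ∀ b ∈ B, ∀ j, ‖b - P (ι b)‖ ≤ ‖b - P j‖)
    (huniq : ∀ b ∈ B, ∀ j, (∀ k, ‖b - P j‖ ≤ ‖b - P k‖) → j = ι b)
    (hne : ∀ b ∈ B, P (ι b) ≠ b)
    (hU : ∀ b ∈ B, ‖b - P (ι b)‖ ∈ U) :
    DifferentiableAt ℝ
      (fun Q : Fin m → E2 => ∑ b ∈ B, f (⨅ i, ‖b - Q i‖) * φ b) P ∧
    ∀ h : Fin m,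
      HasGradientAt
        (fun q : E2 => ∑ b ∈ B, f (⨅ i, ‖b - Function.update P h q i‖) * φ b)
        (∑ b ∈ B.filter (fun b => ι b = h),
          (φ b * deriv f ‖b - P h‖ / ‖b - P h‖) • (P h - b))
        (P h) := by
  have hg : ∀ b ∈ B, HasGradientAt (fun q : E2 => f ‖b - q‖ * φ b)
      ((φ b * deriv f ‖b - P (ι b)‖ / ‖b - P (ι b)‖) • (P (ι b) - b)) (P (ι b)) :=
    fun b hb => aux_grad f b _ (hne b hb) _ (hf.differentiableAt (hUopen.mem_nhds (hU b hb)))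
  have hev := fun b hb => aux_eventually P b (ι b) (hmin b hb) (huniq b hb)
  constructor
  · refine DifferentiableAt.fun_sum fun b hb => ?_
    have h1 : DifferentiableAt ℝ (fun Q : Fin m → E2 => f ‖b - Q (ι b)‖ * φ b) P :=
      DifferentiableAt.comp (g := fun q : E2 => f ‖b - q‖ * φ b) P
        (hg b hb).hasFDerivAt.differentiableAt (differentiableAt_apply (𝕜 := ℝ) (ι b) P)
    refine h1.congr_of_eventuallyEq ?_
    filter_upwards [hev b hb] with Q hQ
    rw [hQ]
  · intro h
    rw [hasGradientAt_iff_hasFDerivAt, map_sum, Finset.sum_filter]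
    refine HasFDerivAt.fun_sum fun b hb => ?_
    have hc : Filter.Tendsto (fun q : E2 => Function.update P h q) (nhds (P h)) (nhds P) := by
      have : Continuous (fun q : E2 => Function.update P h q) := by fun_prop
      simpa using this.tendsto (P h)
    have he : (fun q : E2 => f (⨅ i, ‖b - Function.update P h q i‖) * φ b) =ᶠ[nhds (P h)]
        fun q => f ‖b - Function.update P h q (ι b)‖ * φ b := by
      filter_upwards [hc.eventually (hev b hb)] with q hq
      rw [hq]
    refine HasFDerivAt.congr_of_eventuallyEq ?_ he
    split_ifs with hh
    · subst hh
      simpa using (hg b hb).hasFDerivAt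
    · simp only [Function.update_of_ne hh]
      exact hasFDerivAt_const _ _
end

section
/- Suppose f is differentiable on an open set U ⊆ (0,∞), and let P = (p₁,…,p_m) ∈ (ℝ²)^m be such that for every b ∈ B the index i(b) minimizing ‖b − p_i‖ is unique, p_{i(b)} ≠ b, and ‖b − p_{i(b)}‖ ∈ U. Then for every h ∈ {1,…,m} and every unit vector w ∈ ℝ² (the direction of a network edge), the map t ↦ H(p₁,…,p_{h−1}, p_h + t·w, p_{h+1},…,p_m) is differentiable at t = 0, with derivative equal to the inner product ⟨Σ_{b : i(b)=h} φ_b f′(‖b − p_h‖)(p_h − b)/‖b − p_h‖ , w⟩. -/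
open scoped RealInnerProductSpace

theorem multicenter_collapsed_directional_derivative
    (B : Finset E2) (hB : B.Nonempty)
    (φ : E2 → ℝ) (hφ : ∀ b ∈ B, 0 ≤ φ b)
    (f : ℝ → ℝ) (U : Set ℝ) (hUopen : IsOpen U) (hUpos : U ⊆ Set.Ioi 0)
    (hf : DifferentiableOn ℝ f U)
    (m : ℕ) (hm : 0 < m) (P : Fin m → E2)
    (ι : E2 → Fin m)
    (hmin : ∀ b ∈ B, ∀ j, ‖b - P (ι b)‖ ≤ ‖b - P j‖)
    (huniq : ∀ b ∈ B, ∀ j, (∀ k, ‖b - P j‖ ≤ ‖b - P k‖) → j = ι b)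
    (hne : ∀ b ∈ B, P (ι b) ≠ b)
    (hU : ∀ b ∈ B, ‖b - P (ι b)‖ ∈ U) :
    ∀ h : Fin m, ∀ w : E2, ‖w‖ = 1 →
      HasDerivAt
        (fun t : ℝ =>
          ∑ b ∈ B, f (⨅ i, ‖b - Function.update P h (P h + t • w) i‖) * φ b)
        ⟪∑ b ∈ B.filter (fun b => ι b = h),
            (φ b * deriv f ‖b - P h‖ / ‖b - P h‖) • (P h - b), w⟫
        0 := by
  intro h w _hw
  have hterm : ∀ b ∈ B, HasDerivAt
      (fun t : ℝ => f (⨅ i, ‖b - Function.update P h (P h + t • w) i‖) * φ b)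
      (if ι b = h then
        ⟪(φ b * deriv f ‖b - P h‖ / ‖b - P h‖) • (P h - b), w⟫ else 0) 0 := by
    intro b hb
    haveI : Nonempty (Fin m) := ⟨h⟩
    have hcont : ∀ i, Continuous
        (fun t : ℝ => ‖b - Function.update P h (P h + t • w) i‖) := by
      intro i
      by_cases hi : i = h
      · subst hi
        simp only [Function.update_self]
        fun_prop
      · simp only [Function.update_of_ne hi]
        fun_prop
    have hzero : ∀ i, Function.update P h (P h + (0 : ℝ) • w) i = P i := by
      intro i
      simp
    have hlt : ∀ j, j ≠ ι b → ‖b - P (ι b)‖ < ‖b - P j‖ := by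
      intro j hj
      by_contra hc
      exact hj (huniq b hb j fun k => (not_lt.mp hc).trans (hmin b hb k))
    have hev : ∀ᶠ t : ℝ in nhds 0, ∀ j,
        ‖b - Function.update P h (P h + t • w) (ι b)‖ ≤
          ‖b - Function.update P h (P h + t • w) j‖ := by
      rw [Filter.eventually_all]
      intro j
      by_cases hj : j = ι b
      · subst hj
        exact Filter.Eventually.of_forall fun t => le_rfl
      · have h1 := (hcont (ι b)).continuousAt.eventually_lt (x₀ := (0 : ℝ))
          (hcont j).continuousAt (by simpa only [hzero] using hlt j hj)
        exact h1.mono fun t ht => ht.le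
    have heq : (fun t : ℝ => f (⨅ i, ‖b - Function.update P h (P h + t • w) i‖) * φ b)
        =ᶠ[nhds 0] fun t : ℝ =>
          f ‖b - Function.update P h (P h + t • w) (ι b)‖ * φ b := by
      filter_upwards [hev] with t ht
      have : (⨅ i, ‖b - Function.update P h (P h + t • w) i‖)
          = ‖b - Function.update P h (P h + t • w) (ι b)‖ :=
        le_antisymm (ciInf_le (Set.finite_range _).bddBelow (ι b)) (le_ciInf ht)
      rw [this]
    refine HasDerivAt.congr_of_eventuallyEq ?_ heq
    by_cases hi : ι b = h
    · rw [if_pos hi]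
      have hU' := hU b hb
      rw [hi] at hU' ⊢
      simp only [Function.update_self]
      have hpos : 0 < ‖b - P h‖ := hUpos hU'
      have hg : HasDerivAt (fun t : ℝ => b - (P h + t • w)) (-w) 0 := by
        simpa using (((hasDerivAt_id (0 : ℝ)).smul_const w).const_add (P h)).const_sub b
      have hn : HasDerivAt (fun t : ℝ => ‖b - (P h + t • w)‖)
          (⟪P h - b, w⟫ / ‖b - P h‖) 0 := by
        have h2 := hg.norm_sq.sqrt (by simpa using hpos.ne')
        simp only [Real.sqrt_sq (norm_nonneg _), zero_smul, add_zero] at h2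
        convert h2 using 1
        rw [inner_neg_right, ← inner_neg_left, neg_sub]
        field_simp
      have hfd : HasDerivAt f (deriv f ‖b - P h‖) ‖b - (P h + (0 : ℝ) • w)‖ := by
        simpa using (hf.differentiableAt (hUopen.mem_nhds hU')).hasDerivAt
      have h3 := (hfd.comp (0 : ℝ) hn).mul_const (φ b)
      refine h3.congr_deriv ?_
      rw [real_inner_smul_left]
      ring
    · rw [if_neg hi]
      simp only [Function.update_of_ne hi]
      exact hasDerivAt_const _ _
  have hs := HasDerivAt.fun_sum hterm
  refine hs.congr_deriv ?_
  rw [sum_inner, Finset.sum_filter]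
end

section
/- Assume f is nonincreasing, continuously differentiable on (0,∞) with locally Lipschitz derivative (locally bounded second derivatives), all weights φ_b are nonnegative, and p_i ≠ b for all i ∈ {1,…,m}, b ∈ B. Let G = ∇_l H(P) be the lexicographic gradient at P. Then there exists δ̄ > 0 such that for all step sizes δ ∈ (0, δ̄] the gradient-ascent step does not decrease the multi-center function: H(P + δ·G) ≥ H(P); moreover, if G ≠ 0 the inequality is strict: H(P + δ·G) > H(P). -/
theorem aux_norm (b p g : E2) (h : p ≠ b) :
    HasDerivAt (fun δ : ℝ => ‖b - (p + δ • g)‖) (inner ℝ (p - b) g / ‖b - p‖) 0 := by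
  have h1 : HasDerivAt (fun δ : ℝ => b - (p + δ • g)) (-g) 0 := by
    have := (((hasDerivAt_id (0 : ℝ)).smul_const g).const_add p).const_sub b
    simpa using this
  have h2 := h1.norm_sq
  have hne : ‖b - p‖ ≠ 0 := norm_ne_zero_iff.mpr (sub_ne_zero.mpr h.symm)
  have h3 := h2.sqrt (by simpa using sub_ne_zero.mpr h.symm)
  simp only [Real.sqrt_sq (norm_nonneg _)] at h3
  convert h3 using 1
  have : inner ℝ (p - b) g = - inner ℝ (b - p) g := by
    rw [← inner_neg_left, neg_sub]
  simp only [zero_smul, add_zero, inner_neg_right, this]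
  field_simp

theorem lex_gradient_ascent_step
    (B : Finset E2) (hB : B.Nonempty)
    (φ : E2 → ℝ) (hφ : ∀ b ∈ B, 0 ≤ φ b)
    (f : ℝ → ℝ)
    (hmono : ∀ x y : ℝ, 0 ≤ x → x ≤ y → f y ≤ f x)
    (hf : ContDiffOn ℝ 1 f (Set.Ioi 0))
    (hf' : ∀ x ∈ Set.Ioi (0 : ℝ), ∃ s ∈ nhds x, ∃ K : NNReal,
      LipschitzOnWith K (deriv f) s)
    (m : ℕ) (hm : 0 < m) (P : Fin m → E2)
    (hp : ∀ i, ∀ b ∈ B, P i ≠ b)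
    (ι : E2 → Fin m)
    (hmin : ∀ b ∈ B, ∀ j, ‖b - P (ι b)‖ ≤ ‖b - P j‖)
    (hleast : ∀ b ∈ B, ∀ j, (∀ k, ‖b - P j‖ ≤ ‖b - P k‖) → ι b ≤ j)
    (G : Fin m → E2)
    (hG : ∀ h, G h = ∑ b ∈ B.filter (fun b => ι b = h),
        (φ b * deriv f ‖b - P h‖ / ‖b - P h‖) • (P h - b)) :
    ∃ δbar > (0 : ℝ), ∀ δ : ℝ, 0 < δ → δ ≤ δbar →
      (∑ b ∈ B, φ b * f (⨅ i, ‖b - (P i + δ • G i)‖) ≥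
        ∑ b ∈ B, φ b * f (⨅ i, ‖b - P i‖)) ∧
      (G ≠ 0 →
        ∑ b ∈ B, φ b * f (⨅ i, ‖b - (P i + δ • G i)‖) >
          ∑ b ∈ B, φ b * f (⨅ i, ‖b - P i‖)) := by
  haveI : Nonempty (Fin m) := ⟨⟨0, hm⟩⟩
  have hbdd : ∀ (Q : Fin m → E2) (b : E2), BddBelow (Set.range fun i => ‖b - Q i‖) := by
    intro Q b
    exact ⟨0, by rintro _ ⟨i, rfl⟩; exact norm_nonneg _⟩
  by_cases hG0 : G = 0
  · refine ⟨1, one_pos, fun δ _ _ => ⟨?_, fun h => absurd hG0 h⟩⟩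
    simp [hG0]
  set g : ℝ → ℝ := fun δ => ∑ b ∈ B, φ b * f ‖b - (P (ι b) + δ • G (ι b))‖ with hg
  have hg0 : ∑ b ∈ B, φ b * f (⨅ i, ‖b - P i‖) = g 0 := by
    simp only [hg, zero_smul, add_zero]
    refine Finset.sum_congr rfl fun b hb => ?_
    congr 2
    exact le_antisymm (ciInf_le (hbdd P b) _) (le_ciInf (hmin b hb))
  have hgle : ∀ δ, g δ ≤ ∑ b ∈ B, φ b * f (⨅ i, ‖b - (P i + δ • G i)‖) := by
    intro δ
    refine Finset.sum_le_sum fun b hb => mul_le_mul_of_nonneg_left ?_ (hφ b hb)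
    exact hmono _ _ (le_ciInf fun i => norm_nonneg _)
      (ciInf_le (hbdd (fun i => P i + δ • G i) b) (ι b))
  have hder : HasDerivAt g (∑ b ∈ B, φ b * (deriv f ‖b - P (ι b)‖ *
      (inner ℝ (P (ι b) - b) (G (ι b)) / ‖b - P (ι b)‖))) 0 := by
    refine HasDerivAt.fun_sum fun b hb => HasDerivAt.const_mul _ ?_
    have hpos : 0 < ‖b - P (ι b)‖ := norm_pos_iff.mpr (sub_ne_zero.mpr (hp _ b hb).symm)
    have hfd : HasDerivAt f (deriv f ‖b - P (ι b)‖) ‖b - P (ι b)‖ :=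
      (((hf.differentiableOn (by norm_num)) _ hpos).differentiableAt
        (Ioi_mem_nhds hpos)).hasDerivAt
    have hn := aux_norm b (P (ι b)) (G (ι b)) (hp _ b hb)
    exact HasDerivAt.comp (h₂ := f) (0 : ℝ) (by simpa using hfd) hn
  have hsum : (∑ b ∈ B, φ b * (deriv f ‖b - P (ι b)‖ *
      (inner ℝ (P (ι b) - b) (G (ι b)) / ‖b - P (ι b)‖))) = ∑ h, ‖G h‖ ^ 2 := by
    rw [← Finset.sum_fiberwise B ι]
    refine Finset.sum_congr rfl fun h _ => ?_
    rw [← real_inner_self_eq_norm_sq]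
    conv_rhs => rw [show inner ℝ (G h) (G h) = inner ℝ (∑ b ∈ B.filter (fun b => ι b = h),
        (φ b * deriv f ‖b - P h‖ / ‖b - P h‖) • (P h - b)) (G h) by rw [← hG h]]
    rw [sum_inner]
    refine Finset.sum_congr rfl fun b hb => ?_
    obtain rfl := (Finset.mem_filter.mp hb).2
    rw [real_inner_smul_left]
    ring
  rw [hsum] at hder
  have hc : 0 < ∑ h, ‖G h‖ ^ 2 := by
    obtain ⟨h, hh⟩ := Function.ne_iff.mp hG0
    refine Finset.sum_pos' (fun _ _ => by positivity) ⟨h, Finset.mem_univ _, ?_⟩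
    have : 0 < ‖G h‖ := norm_pos_iff.mpr hh
    positivity
  have hev := (hasDerivAt_iff_tendsto_slope.mp hder).eventually (lt_mem_nhds hc)
  rw [eventually_nhdsWithin_iff, Metric.eventually_nhds_iff] at hev
  obtain ⟨ε, hε, hev⟩ := hev
  have key : ∀ δ : ℝ, 0 < δ → δ ≤ ε / 2 → g 0 < g δ := by
    intro δ h0 h1
    have := hev (y := δ) (by rw [Real.dist_eq, sub_zero, abs_of_pos h0]; linarith) h0.ne'
    rw [slope_def_field, sub_zero] at this
    have := (div_pos_iff_of_pos_right h0).mp this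
    linarith
  refine ⟨ε / 2, by positivity, fun δ h0 h1 => ?_⟩
  have := lt_of_lt_of_le (key δ h0 h1) (hgle δ)
  rw [hg0]
  exact ⟨this.le, fun _ => this⟩
end

section
/- Assume f is nonincreasing, continuously differentiable on (0,∞) with locally Lipschitz derivative, all weights φ_b are nonnegative, and p_i ≠ b for all i ∈ {1,…,m}, b ∈ B. Let G = ∇_l H(P) be the lexicographic gradient, let w₁,…,w_m ∈ ℝ² be unit vectors (the directions of the network edges containing the sensors), and define the projected step D ∈ (ℝ²)^m by D_h = ⟨G_h, w_h⟩ w_h. Then there exists δ̄ > 0 such that for all δ ∈ (0, δ̄] the network-constrained gradient-ascent step does not decrease the multi-center function: H(P + δ·D) ≥ H(P); moreover the inequality is strict whenever D ≠ 0. -/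
open scoped RealInnerProductSpace

theorem projected_lex_gradient_ascent_step
    (B : Finset E2) (hB : B.Nonempty)
    (φ : E2 → ℝ) (hφ : ∀ b ∈ B, 0 ≤ φ b)
    (f : ℝ → ℝ)
    (hmono : ∀ x y : ℝ, 0 ≤ x → x ≤ y → f y ≤ f x)
    (hf : ContDiffOn ℝ 1 f (Set.Ioi 0))
    (hf' : ∀ x ∈ Set.Ioi (0 : ℝ), ∃ s ∈ nhds x, ∃ K : NNReal,
      LipschitzOnWith K (deriv f) s)
    (m : ℕ) (hm : 0 < m) (P : Fin m → E2)
    (hp : ∀ i, ∀ b ∈ B, P i ≠ b)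
    (ι : E2 → Fin m)
    (hmin : ∀ b ∈ B, ∀ j, ‖b - P (ι b)‖ ≤ ‖b - P j‖)
    (hleast : ∀ b ∈ B, ∀ j, (∀ k, ‖b - P j‖ ≤ ‖b - P k‖) → ι b ≤ j)
    (G : Fin m → E2)
    (hG : ∀ h, G h = ∑ b ∈ B.filter (fun b => ι b = h),
        (φ b * deriv f ‖b - P h‖ / ‖b - P h‖) • (P h - b))
    (w : Fin m → E2) (hw : ∀ h, ‖w h‖ = 1)
    (D : Fin m → E2) (hD : ∀ h, D h = ⟪G h, w h⟫ • w h) :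
    ∃ δbar > (0 : ℝ), ∀ δ : ℝ, 0 < δ → δ ≤ δbar →
      (∑ b ∈ B, φ b * f (⨅ i, ‖b - (P i + δ • D i)‖) ≥
        ∑ b ∈ B, φ b * f (⨅ i, ‖b - P i‖)) ∧
      (D ≠ 0 →
        ∑ b ∈ B, φ b * f (⨅ i, ‖b - (P i + δ • D i)‖) >
          ∑ b ∈ B, φ b * f (⨅ i, ‖b - P i‖)) := by
  haveI : Nonempty (Fin m) := ⟨⟨0, hm⟩⟩
  have hbdd : ∀ (u : Fin m → ℝ), BddBelow (Set.range u) := fun u => (Set.finite_range u).bddBelow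
  have h0 : ∀ b ∈ B, (⨅ i, ‖b - P i‖) = ‖b - P (ι b)‖ := fun b hb =>
    le_antisymm (ciInf_le (hbdd _) (ι b)) (le_ciInf (hmin b hb))
  have hH0 : ∑ b ∈ B, φ b * f (⨅ i, ‖b - P i‖) = ∑ b ∈ B, φ b * f ‖b - P (ι b)‖ :=
    Finset.sum_congr rfl fun b hb => by rw [h0 b hb]
  have hlow : ∀ δ : ℝ, ∑ b ∈ B, φ b * f ‖b - (P (ι b) + δ • D (ι b))‖ ≤
      ∑ b ∈ B, φ b * f (⨅ i, ‖b - (P i + δ • D i)‖) := by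
    intro δ
    refine Finset.sum_le_sum fun b hb => mul_le_mul_of_nonneg_left ?_ (hφ b hb)
    exact hmono _ _ (Real.iInf_nonneg fun i => norm_nonneg _)
      (ciInf_le (hbdd fun i => ‖b - (P i + δ • D i)‖) (ι b))
  by_cases hD0 : D = 0
  · refine ⟨1, one_pos, fun δ _ _ => ⟨?_, fun h => absurd hD0 h⟩⟩
    simp [hD0]
  have hnorm : ∀ b ∈ B, HasDerivAt (fun δ : ℝ => ‖b - (P (ι b) + δ • D (ι b))‖)
      (⟪P (ι b) - b, D (ι b)⟫ / ‖b - P (ι b)‖) 0 := by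
    intro b hb
    have hne : ‖b - P (ι b)‖ ≠ 0 := by
      rw [norm_ne_zero_iff, sub_ne_zero]; exact (hp _ b hb).symm
    have h1 : HasDerivAt (fun δ : ℝ => b - (P (ι b) + δ • D (ι b))) (-D (ι b)) 0 := by
      have := (((hasDerivAt_id (0:ℝ)).smul_const (D (ι b))).const_add (P (ι b))).const_sub b
      simpa using this
    have h2 := h1.norm_sq.sqrt (by simpa using hne)
    simp only [Real.sqrt_sq (norm_nonneg _), zero_smul, add_zero] at h2
    convert h2 using 1
    rw [← neg_sub b, inner_neg_left, inner_neg_right]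
    field_simp
  have hder : HasDerivAt (fun δ : ℝ => ∑ b ∈ B, φ b * f ‖b - (P (ι b) + δ • D (ι b))‖)
      (∑ b ∈ B, φ b * (deriv f ‖b - P (ι b)‖ * (⟪P (ι b) - b, D (ι b)⟫ / ‖b - P (ι b)‖))) 0 := by
    refine HasDerivAt.fun_sum fun b hb => HasDerivAt.const_mul _ ?_
    have hpos : 0 < ‖b - P (ι b)‖ := by
      rw [norm_pos_iff, sub_ne_zero]; exact (hp _ b hb).symm
    have hfd : HasDerivAt f (deriv f ‖b - P (ι b)‖) ‖b - P (ι b)‖ :=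
      ((hf.differentiableOn (by norm_num)).differentiableAt (Ioi_mem_nhds hpos)).hasDerivAt
    exact HasDerivAt.comp_of_eq (0:ℝ) hfd (hnorm b hb) (by simp)
  have hsum : (∑ b ∈ B, φ b * (deriv f ‖b - P (ι b)‖ *
      (⟪P (ι b) - b, D (ι b)⟫ / ‖b - P (ι b)‖))) = ∑ h, ⟪G h, w h⟫ ^ 2 := by
    rw [← Finset.sum_fiberwise B ι]
    refine Finset.sum_congr rfl fun h _ => ?_
    have : ⟪G h, w h⟫ ^ 2 = ⟪G h, D h⟫ := by rw [hD h, inner_smul_right]; ring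
    rw [this]
    conv_rhs => rw [hG h, sum_inner]
    refine Finset.sum_congr rfl fun b hb => ?_
    rw [(Finset.mem_filter.1 hb).2, real_inner_smul_left]
    ring
  have hpos : 0 < ∑ h, ⟪G h, w h⟫ ^ 2 := by
    obtain ⟨h, hh⟩ := Function.ne_iff.1 hD0
    refine Finset.sum_pos' (fun _ _ => sq_nonneg _) ⟨h, Finset.mem_univ _, ?_⟩
    have : ⟪G h, w h⟫ ≠ 0 := fun h0 => hh (by rw [hD h, h0, zero_smul]; rfl)
    positivity
  rw [hsum] at hder
  have hev := hder.tendsto_slope_zero_right.eventually (lt_mem_nhds hpos)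
  obtain ⟨c, hc, hcs⟩ := (mem_nhdsGT_iff_exists_Ioc_subset).1 hev
  have key : ∀ δ : ℝ, 0 < δ → δ ≤ c →
      ∑ b ∈ B, φ b * f (⨅ i, ‖b - (P i + δ • D i)‖) >
          ∑ b ∈ B, φ b * f (⨅ i, ‖b - P i‖) := by
    intro δ h1 h2
    have h3 := hcs ⟨h1, h2⟩
    simp only [Set.mem_setOf_eq, smul_eq_mul, zero_add, zero_smul, add_zero] at h3
    have h4 := (mul_pos_iff_of_pos_left (inv_pos.2 h1)).1 h3
    have := hlow δ
    rw [hH0]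
    linarith
  exact ⟨c, hc, fun δ h1 h2 => ⟨(key δ h1 h2).le, fun _ => key δ h1 h2⟩⟩
end

section
/- Let R₀ = 0 < R₁ < … < R_N < R_{N+1} = +∞, let F_α : ℝ × ℝ → ℝ (α = 1,…,N+1) be continuously differentiable, and define the piecewise function F(v,t) = F_α(v,t) for v ∈ [R_{α−1}, R_α). Let ν : ℝ × ℝ → ℝ be continuously differentiable, and fix x̄ ∈ ℝ such that: (i) ν(x̄,0) ∉ {R₁,…,R_N} and ν(x̄,1) ∉ {R₁,…,R_N}; (ii) for each i ∈ {1,…,N} the set {t ∈ [0,1] : ν(x̄,t) = R_i} is finite, say {t_{i,1},…,t_{i,k_i}} ⊂ (0,1), and ∂ν/∂t(x̄, t_{i,j}) ≠ 0 at each such point. Then the function g(x) = ∫₀¹ F(ν(x,t), t) dt is differentiable at x̄, with g′(x̄) = ∫₀¹ ∂F/∂v(ν(x̄,t), t) · ∂ν/∂x(x̄,t) dt + Σ_{i=1}^{N} Σ_{j=1}^{k_i} (F_{i+1}(R_i, t_{i,j}) − F_i(R_i, t_{i,j})) · (∂ν/∂x(x̄, t_{i,j})) / |∂ν/∂t(x̄,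 t_{i,j})|. -/
section aux
open Set Filter Topology MeasureTheory

lemma aux_partial_fst {ν : ℝ → ℝ → ℝ} (hν : ContDiff ℝ 1 (fun q : ℝ × ℝ => ν q.1 q.2)) (x t : ℝ) :
    HasDerivAt (fun x => ν x t) (fderiv ℝ (fun q : ℝ × ℝ => ν q.1 q.2) (x, t) (1, 0)) x := by
  have h := (hν.differentiable one_ne_zero (x, t)).hasFDerivAt
  have h2 : HasDerivAt (fun x : ℝ => (x, t)) ((1 : ℝ), (0 : ℝ)) x :=
    (hasDerivAt_id x).prodMk (hasDerivAt_const x t)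
  exact h.comp_hasDerivAt x h2

lemma aux_partial_snd {ν : ℝ → ℝ → ℝ} (hν : ContDiff ℝ 1 (fun q : ℝ × ℝ => ν q.1 q.2)) (x t : ℝ) :
    HasDerivAt (ν x) (fderiv ℝ (fun q : ℝ × ℝ => ν q.1 q.2) (x, t) (0, 1)) t := by
  have h := (hν.differentiable one_ne_zero (x, t)).hasFDerivAt
  have h2 : HasDerivAt (fun t : ℝ => (x, t)) ((0 : ℝ), (1 : ℝ)) t :=
    (hasDerivAt_const t x).prodMk (hasDerivAt_id t)
  exact h.comp_hasDerivAt t h2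

lemma aux_cont {ν : ℝ → ℝ → ℝ} (hν : ContDiff ℝ 1 (fun q : ℝ × ℝ => ν q.1 q.2)) (w : ℝ × ℝ) :
    Continuous (fun q => fderiv ℝ (fun q : ℝ × ℝ => ν q.1 q.2) q w) :=
  (hν.continuous_fderiv one_ne_zero).clm_apply continuous_const

lemma aux_local_pos {ν : ℝ → ℝ → ℝ} (hν : ContDiff ℝ 1 (fun q : ℝ × ℝ => ν q.1 q.2))
    {K : ℝ → ℝ} (hK : Continuous K) {c xb t₀ : ℝ} (h0 : ν xb t₀ = c)
    (hpos : 0 < deriv (ν xb) t₀) :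
    ∃ r > 0, ∀ δ, 0 < δ → δ < r →
      HasDerivAt (fun x => ∫ t in (t₀ - δ)..(t₀ + δ), indicator {t | c ≤ ν x t} K t)
        (K t₀ * (deriv (fun x => ν x t₀) xb / |deriv (ν xb) t₀|)) xb := by
  set P := fun q : ℝ × ℝ => ν q.1 q.2 with hP
  have hx := aux_partial_fst hν
  have ht := aux_partial_snd hν
  rw [(ht xb t₀).deriv] at hpos ⊢
  rw [(hx xb t₀).deriv, abs_of_pos hpos]
  have hs : HasStrictFDerivAt P (fderiv ℝ P (xb, t₀)) (xb, t₀) :=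
    hν.contDiffAt.hasStrictFDerivAt one_ne_zero
  set a := fderiv ℝ P (xb, t₀) (1, 0)
  set b := fderiv ℝ P (xb, t₀) (0, 1) with hb
  have hinv : (fderiv ℝ P (xb, t₀) ∘L .inr ℝ ℝ ℝ).IsInvertible := by
    refine ⟨ContinuousLinearEquiv.unitsEquivAut ℝ (Units.mk0 b hpos.ne'), ?_⟩
    ext
    simp [hb]
  set τ := hs.implicitFunctionOfProdDomain hinv with hτ
  have hτt : Tendsto τ (𝓝 xb) (𝓝 t₀) := hs.tendsto_implicitFunctionOfProdDomain hinv
  have hτe : ∀ᶠ x in 𝓝 xb, ν x (τ x) = c := by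
    have := hs.eventually_apply_implicitFunctionOfProdDomain hinv
    filter_upwards [this] with x hx
    rw [← h0]; exact hx
  have hτd : HasDerivAt τ (-(a / b)) xb := by
    have h1 := (hs.hasStrictFDerivAt_implicitFunctionOfProdDomain hinv).hasFDerivAt.hasDerivAt
    change HasDerivAt τ _ xb at h1
    have h3 : τ xb = t₀ := tendsto_nhds_unique h1.continuousAt.tendsto hτt
    set d := (-(fderiv ℝ P (xb, t₀) ∘L .inr ℝ ℝ ℝ).inverse ∘L (fderiv ℝ P (xb, t₀) ∘L .inl ℝ ℝ ℝ)) (1:ℝ)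
    have h2 : HasDerivAt (fun x => (x, τ x)) ((1 : ℝ), d) xb := (hasDerivAt_id xb).prodMk h1
    have h4 : HasFDerivAt P (fderiv ℝ P (xb, t₀)) (xb, τ xb) := by rw [h3]; exact hs.hasFDerivAt
    have h5 := h4.comp_hasDerivAt xb h2
    have h6 : HasDerivAt (P ∘ fun x => (x, τ x)) 0 xb :=
      (hasDerivAt_const xb c).congr_of_eventuallyEq hτe
    have h7 := h5.unique h6
    have h8 : ((1 : ℝ), d) = (1, 0) + d • ((0 : ℝ), (1 : ℝ)) := by simp
    rw [h8, map_add, map_smul, smul_eq_mul] at h7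
    have : d = -(a / b) := by
      field_simp
      change a + d * b = 0 at h7
      linarith
    rwa [this] at h1
  have hτ0 : τ xb = t₀ := tendsto_nhds_unique hτd.continuousAt.tendsto hτt
  have hnb : ∀ᶠ q in 𝓝 (xb, t₀), 0 < fderiv ℝ P q (0, 1) :=
    (aux_cont hν (0, 1)).continuousAt.eventually (lt_mem_nhds hpos)
  obtain ⟨r, hr, hball⟩ := Metric.eventually_nhds_iff.1 hnb
  refine ⟨r, hr, fun δ hδ hδr => ?_⟩
  have hmain : HasDerivAt (fun x => ∫ t in (τ x)..(t₀ + δ), K t) (K t₀ * (a / b)) xb := by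
    have h1 : HasDerivAt (fun u => ∫ t in u..(t₀ + δ), K t) (-K (τ xb)) (τ xb) :=
      intervalIntegral.integral_hasDerivAt_left (hK.intervalIntegrable _ _)
        hK.aestronglyMeasurable.stronglyMeasurableAtFilter hK.continuousAt
    have := h1.comp xb hτd
    rw [hτ0] at this
    have e : K t₀ * (a / b) = -K t₀ * -(a / b) := by ring
    rw [e]
    exact this
  refine hmain.congr_of_eventuallyEq ?_
  filter_upwards [hτe, hτt (Ioo_mem_nhds (sub_lt_self t₀ hδ) (lt_add_of_pos_right t₀ hδ)),
    Metric.ball_mem_nhds xb hr] with x h1 h2 h3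
  have hmono : StrictMonoOn (ν x) (Icc (t₀ - δ) (t₀ + δ)) := by
    refine strictMonoOn_of_deriv_pos (convex_Icc _ _)
      (fun t _ => (ht x t).continuousAt.continuousWithinAt) ?_
    intro t htt
    rw [interior_Icc] at htt
    rw [(ht x t).deriv]
    apply hball
    rw [Prod.dist_eq, max_lt_iff]
    refine ⟨h3, ?_⟩
    rw [Real.dist_eq, abs_lt]
    constructor <;> linarith [htt.1, htt.2]
  have h2' : τ x ∈ Ioo (t₀ - δ) (t₀ + δ) := h2
  rw [intervalIntegral.integral_of_le (by linarith), intervalIntegral.integral_of_le h2'.2.le]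
  have e1 : ∫ t in Ioc (t₀ - δ) (t₀ + δ), indicator {t | c ≤ ν x t} K t =
      ∫ t in Ioc (t₀ - δ) (t₀ + δ), indicator (Ici (τ x)) K t := by
    refine setIntegral_congr_fun measurableSet_Ioc fun t htt => ?_
    have : c ≤ ν x t ↔ τ x ≤ t := by
      rw [← h1]
      exact hmono.le_iff_le ⟨h2'.1.le, h2'.2.le⟩ ⟨htt.1.le, htt.2⟩
    simp only [indicator, mem_ofPred_eq, mem_Ici, this]
  rw [e1, setIntegral_indicator measurableSet_Ici, ← integral_Icc_eq_integral_Ioc]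
  congr 2
  ext t
  simp only [mem_inter_iff, mem_Ioc, mem_Ici, mem_Icc]
  constructor
  · rintro ⟨⟨_, h⟩, h'⟩; exact ⟨h', h⟩
  · rintro ⟨h, h'⟩; exact ⟨⟨by linarith [h2'.1], h'⟩, h⟩

lemma aux_local {ν : ℝ → ℝ → ℝ} (hν : ContDiff ℝ 1 (fun q : ℝ × ℝ => ν q.1 q.2))
    {K : ℝ → ℝ} (hK : Continuous K) {c xb t₀ : ℝ} (h0 : ν xb t₀ = c)
    (hne : deriv (ν xb) t₀ ≠ 0) :
    ∃ r > 0, ∀ δ, 0 < δ → δ < r →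
      HasDerivAt (fun x => ∫ t in (t₀ - δ)..(t₀ + δ), indicator {t | c ≤ ν x t} K t)
        (K t₀ * (deriv (fun x => ν x t₀) xb / |deriv (ν xb) t₀|)) xb := by
  rcases lt_or_gt_of_ne hne with h | h
  · have hν' : ContDiff ℝ 1 (fun q : ℝ × ℝ => (fun x t => ν x (-t)) q.1 q.2) :=
      hν.comp (contDiff_fst.prodMk contDiff_snd.neg)
    have hd : deriv (fun t => ν xb (-t)) (-t₀) = - deriv (ν xb) t₀ := by
      rw [deriv_comp_neg (ν xb) (-t₀), neg_neg]
    obtain ⟨r, hr, H⟩ := aux_local_pos (ν := fun x t => ν x (-t)) hν' (hK.comp continuous_neg) (c := c) (xb := xb) (t₀ := -t₀)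
      (by simpa using h0) (by simp only [hd]; linarith)
    refine ⟨r, hr, fun δ h1 h2 => ?_⟩
    have := H δ h1 h2
    simp only [hd, abs_neg, neg_neg, Function.comp] at this
    convert this using 1
    ext x
    have e := intervalIntegral.integral_comp_neg (a := -t₀ - δ) (b := -t₀ + δ)
      (fun t => indicator {t | c ≤ ν x t} K t)
    rw [show t₀ - δ = -(-t₀ + δ) by ring, show t₀ + δ = -(-t₀ - δ) by ring, ← e]
    rfl
  · exact aux_local_pos hν hK h0 h

lemma aux_int {ν : ℝ → ℝ → ℝ} (hν : ContDiff ℝ 1 (fun q : ℝ × ℝ => ν q.1 q.2))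
    {K : ℝ → ℝ} (hK : Continuous K) (c x a b : ℝ) :
    IntegrableOn (indicator {t | c ≤ ν x t} K) (Ioc a b) := by
  have hc : Continuous (ν x) := hν.continuous.comp (by fun_prop : Continuous fun t : ℝ => (x, t))
  have : IntegrableOn K (Ioc a b) := hK.integrableOn_Ioc
  exact Integrable.indicator this (isClosed_le continuous_const hc).measurableSet

lemma aux_global {ν : ℝ → ℝ → ℝ} (hν : ContDiff ℝ 1 (fun q : ℝ × ℝ => ν q.1 q.2))
    {K : ℝ → ℝ} (hK : Continuous K) {c xb : ℝ} (h0 : ν xb 0 ≠ c) (h1 : ν xb 1 ≠ c)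
    (S : Finset ℝ) (hS : (↑S : Set ℝ) = {t : ℝ | t ∈ Icc (0 : ℝ) 1 ∧ ν xb t = c})
    (hd : ∀ t₀ ∈ S, deriv (ν xb) t₀ ≠ 0) :
    HasDerivAt (fun x => ∫ t in (0 : ℝ)..1, indicator {t | c ≤ ν x t} K t)
      (∑ t₀ ∈ S, K t₀ * (deriv (fun x => ν x t₀) xb / |deriv (ν xb) t₀|)) xb := by
  have hS' : ∀ t, t ∈ S ↔ t ∈ Icc (0 : ℝ) 1 ∧ ν xb t = c := fun t => by
    rw [← Finset.mem_coe, hS]; rfl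
  have hS01 : ∀ t ∈ S, t ∈ Ioo (0 : ℝ) 1 := by
    intro t ht
    obtain ⟨⟨ha, hb⟩, hc⟩ := (hS' t).1 ht
    refine ⟨lt_of_le_of_ne ha ?_, lt_of_le_of_ne hb ?_⟩
    · rintro rfl; exact h0 hc
    · rintro rfl; exact h1 hc
  have E1 : ∀ t₀ ∈ S, ∀ᶠ δ in 𝓝[>] (0 : ℝ),
      HasDerivAt (fun x => ∫ t in (t₀ - δ)..(t₀ + δ), indicator {t | c ≤ ν x t} K t)
        (K t₀ * (deriv (fun x => ν x t₀) xb / |deriv (ν xb) t₀|)) xb := by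
    intro t₀ ht
    obtain ⟨r, hr, H⟩ := aux_local hν hK ((hS' t₀).1 ht).2 (hd t₀ ht)
    filter_upwards [Ioo_mem_nhdsGT hr] with δ hδ using H δ hδ.1 hδ.2
  have E2 : ∀ t₀ ∈ S, ∀ᶠ δ in 𝓝[>] (0 : ℝ), Ioc (t₀ - δ) (t₀ + δ) ⊆ Ioc 0 1 := by
    intro t₀ ht
    filter_upwards [Ioo_mem_nhdsGT (hS01 t₀ ht).1, Ioo_mem_nhdsGT (sub_pos.2 (hS01 t₀ ht).2)]
      with δ h1 h2
    exact Ioc_subset_Ioc (by linarith [h1.2]) (by linarith [h2.2])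
  have E3 : ∀ s ∈ S, ∀ t ∈ S, ∀ᶠ δ in 𝓝[>] (0 : ℝ), s ≠ t →
      Disjoint (Ioc (s - δ) (s + δ)) (Ioc (t - δ) (t + δ)) := by
    intro s _ t _
    by_cases hst : s = t
    · exact Eventually.of_forall fun _ h => absurd hst h
    have : 0 < |s - t| / 2 := by have := abs_pos.2 (sub_ne_zero.2 hst); positivity
    filter_upwards [Ioo_mem_nhdsGT this] with δ h _
    rw [Set.disjoint_left]
    intro u hu hu'
    have : |s - t| < 2 * δ := by
      rw [abs_lt]; constructor <;> linarith [hu.1, hu.2, hu'.1, hu'.2]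
    linarith [h.2]
  have E3' : ∀ᶠ δ in 𝓝[>] (0 : ℝ), ∀ s ∈ S, ∀ t ∈ S, s ≠ t →
      Disjoint (Ioc (s - δ) (s + δ)) (Ioc (t - δ) (t + δ)) := by
    rw [eventually_all_finset]
    intro s hs
    rw [eventually_all_finset]
    exact E3 s hs
  obtain ⟨δ, ⟨⟨⟨hE1, hE2⟩, hE3⟩, hδ⟩⟩ := ((((eventually_all_finset S).2 E1).and
    ((eventually_all_finset S).2 E2)).and E3' |>.and self_mem_nhdsWithin).exists
  have hδ : 0 < δ := hδ
  set U : Set ℝ := ⋃ t ∈ S, Ioc (t - δ) (t + δ) with hU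
  have hUm : MeasurableSet U := Finset.measurableSet_biUnion S fun _ _ => measurableSet_Ioc
  have hUs : U ⊆ Ioc 0 1 := iUnion₂_subset hE2
  -- the compact remainder
  set C : Set ℝ := Icc 0 1 \ ⋃ t ∈ S, Ioo (t - δ) (t + δ) with hC
  have hCc : IsCompact C :=
    isCompact_Icc.diff (isOpen_biUnion fun _ _ => isOpen_Ioo)
  have hCne : ∀ t ∈ C, ν xb t ≠ c := by
    intro t ht h
    refine ht.2 (mem_iUnion₂.2 ⟨t, (hS' t).2 ⟨ht.1, h⟩, ?_, ?_⟩) <;> linarith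
  have hCev : ∀ᶠ x in 𝓝 xb, ∀ t ∈ C, (c ≤ ν x t ↔ c ≤ ν xb t) := by
    apply hCc.eventually_forall_of_forall_eventually
    intro t ht
    have hcont : ContinuousAt (fun q : ℝ × ℝ => ν q.1 q.2) (xb, t) := hν.continuous.continuousAt
    have hcont2 : ContinuousAt (fun q : ℝ × ℝ => ν xb q.2) (xb, t) :=
      (hν.continuous.comp (by fun_prop : Continuous fun q : ℝ × ℝ => (xb, q.2))).continuousAt
    rcases lt_or_gt_of_ne (hCne t ht) with h | h
    · filter_upwards [hcont.eventually (gt_mem_nhds h), hcont2.eventually (gt_mem_nhds h)]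
        with q h1 h2
      exact ⟨fun h => absurd h h1.not_ge, fun h => absurd h h2.not_ge⟩
    · filter_upwards [hcont.eventually (lt_mem_nhds h), hcont2.eventually (lt_mem_nhds h)]
        with q h1 h2
      exact ⟨fun _ => h2.le, fun _ => h1.le⟩
  have hsum := HasDerivAt.fun_sum hE1
  have hfin := hsum.const_add (∫ t in Ioc 0 1 \ U, indicator {t | c ≤ ν xb t} K t)
  refine hfin.congr_of_eventuallyEq ?_
  filter_upwards [hCev] with x hx
  rw [intervalIntegral.integral_of_le zero_le_one]
  have hi := aux_int hν hK c x 0 1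
  have e1 := setIntegral_sdiff hUm hi hUs
  have e2 : ∫ t in U, indicator {t | c ≤ ν x t} K t =
      ∑ s ∈ S, ∫ t in (s - δ)..(s + δ), indicator {t | c ≤ ν x t} K t := by
    rw [hU, integral_biUnion_finset S (fun _ _ => measurableSet_Ioc)
      (fun s hs t ht hst => hE3 s hs t ht hst) (fun s _ => aux_int hν hK c x _ _)]
    refine Finset.sum_congr rfl fun s _ => ?_
    rw [intervalIntegral.integral_of_le (by linarith)]
  have e3 : ∫ t in Ioc 0 1 \ U, indicator {t | c ≤ ν x t} K t =
      ∫ t in Ioc 0 1 \ U, indicator {t | c ≤ ν xb t} K t := by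
    refine setIntegral_congr_fun (measurableSet_Ioc.diff hUm) fun t ht => ?_
    have htC : t ∈ C := by
      refine ⟨Ioc_subset_Icc_self ht.1, fun h => ht.2 ?_⟩
      obtain ⟨s, hs, h⟩ := mem_iUnion₂.1 h
      exact mem_iUnion₂.2 ⟨s, hs, Ioo_subset_Ioc_self h⟩
    simp only [indicator, mem_ofPred_eq, hx t htC]
  linarith

lemma aux_smooth {H : ℝ → ℝ → ℝ} (hH : ContDiff ℝ 1 (fun q : ℝ × ℝ => H q.1 q.2)) (xb : ℝ)
    (A : ℝ → Set ℝ) (hA : ∀ x, MeasurableSet (A x))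
    (hev : ∀ᵐ t ∂(volume.restrict (Ioc (0 : ℝ) 1)), ∀ᶠ x in 𝓝 xb, (t ∈ A x ↔ t ∈ A xb)) :
    HasDerivAt (fun x => ∫ t in (0 : ℝ)..1, indicator (A x) (fun t => H x t - H xb t) t)
      (∫ t in (0 : ℝ)..1, indicator (A xb) (fun t => deriv (fun x => H x t) xb) t) xb := by
  have hx := aux_partial_fst hH
  have hc : ∀ x, Continuous (H x) := fun x =>
    hH.continuous.comp (by fun_prop : Continuous fun t : ℝ => (x, t))
  have hcd : Continuous (fun t => deriv (fun x => H x t) xb) := by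
    simp only [fun t => (hx xb t).deriv]
    exact (aux_cont hH (1, 0)).comp (by fun_prop : Continuous fun t : ℝ => (xb, t))
  obtain ⟨B, hB⟩ := ((isCompact_closedBall xb 1).prod
    (isCompact_Icc (a := (0 : ℝ)) (b := 1))).exists_bound_of_continuousOn
    (aux_cont hH (1, 0)).continuousOn
  simp only [intervalIntegral.integral_of_le zero_le_one]
  have key := hasFDerivAt_integral_of_dominated_loc_of_lip' (𝕜 := ℝ)
    (μ := volume.restrict (Ioc (0 : ℝ) 1)) (x₀ := xb) (s := Metric.closedBall xb 1)
    (F := fun x t => indicator (A x) (fun t => H x t - H xb t) t)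
    (F' := fun t => ContinuousLinearMap.toSpanSingleton ℝ
      (indicator (A xb) (fun t => deriv (fun x => H x t) xb) t))
    (bound := fun _ => B)
    (Metric.closedBall_mem_nhds xb one_pos)
    (fun x _ => ((hc x).sub (hc xb)).aestronglyMeasurable.indicator (hA x))
    (by simp) ?_ ?_ (integrable_const _) ?_
  · have := key.2.hasDerivAt
    rw [ContinuousLinearMap.integral_apply key.1] at this
    simpa using this
  · have : AEStronglyMeasurable (indicator (A xb) (fun t => deriv (fun x => H x t) xb))
      (volume.restrict (Ioc (0 : ℝ) 1)) := hcd.aestronglyMeasurable.indicator (hA xb)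
    exact (ContinuousLinearMap.toSpanSingletonCLE (𝕜 := ℝ) (E := ℝ)).continuous.comp_aestronglyMeasurable this
  · filter_upwards [ae_restrict_mem measurableSet_Ioc] with t ht x hxx
    simp only [sub_self, indicator_zero, sub_zero]
    have : ‖H x t - H xb t‖ ≤ B * ‖x - xb‖ := by
      refine (convex_closedBall xb 1).norm_image_sub_le_of_norm_hasDerivWithin_le
        (f := fun x => H x t) (fun y hy => (hx y t).hasDerivWithinAt) ?_
        (Metric.mem_closedBall_self zero_le_one) hxx
      intro y hy
      exact hB (y, t) ⟨hy, ht.1.le, ht.2⟩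
    exact (norm_indicator_le_norm_self _ _).trans this
  · filter_upwards [hev] with t ht
    have h1 : HasDerivAt (fun x => H x t - H xb t) (deriv (fun x => H x t) xb) xb := by
      rw [(hx xb t).deriv]; exact (hx xb t).sub_const _
    by_cases hm : t ∈ A xb
    · rw [indicator_of_mem hm]
      refine (h1.congr_of_eventuallyEq ?_).hasFDerivAt
      filter_upwards [ht] with x hx
      rw [indicator_of_mem (hx.2 hm)]
    · rw [indicator_of_notMem hm]
      refine ((hasDerivAt_const xb (0 : ℝ)).congr_of_eventuallyEq ?_).hasFDerivAt
      filter_upwards [ht] with x hx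
      rw [indicator_of_notMem (fun h => hm (hx.1 h))]

lemma aux_comb {ν : ℝ → ℝ → ℝ} (hν : ContDiff ℝ 1 (fun q : ℝ × ℝ => ν q.1 q.2))
    {H : ℝ → ℝ → ℝ} (hH : ContDiff ℝ 1 (fun q : ℝ × ℝ => H q.1 q.2))
    {c xb : ℝ} (h0 : ν xb 0 ≠ c) (h1 : ν xb 1 ≠ c)
    (S : Finset ℝ) (hS : (↑S : Set ℝ) = {t : ℝ | t ∈ Icc (0 : ℝ) 1 ∧ ν xb t = c})
    (hd : ∀ t₀ ∈ S, deriv (ν xb) t₀ ≠ 0) :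
    HasDerivAt (fun x => ∫ t in (0 : ℝ)..1, indicator {t | c ≤ ν x t} (H x) t)
      ((∫ t in (0 : ℝ)..1, indicator {t | c ≤ ν xb t} (fun t => deriv (fun x => H x t) xb) t) +
        ∑ t₀ ∈ S, H xb t₀ * (deriv (fun x => ν x t₀) xb / |deriv (ν xb) t₀|)) xb := by
  have hc : ∀ x, Continuous (H x) := fun x =>
    hH.continuous.comp (by fun_prop : Continuous fun t : ℝ => (x, t))
  have hcν : ∀ x, Continuous (ν x) := fun x =>
    hν.continuous.comp (by fun_prop : Continuous fun t : ℝ => (x, t))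
  have g1 := aux_smooth hH xb (fun x => {t | c ≤ ν x t})
    (fun x => (isClosed_le continuous_const (hcν x)).measurableSet) (by
      have hS0 : ∀ᵐ t : ℝ, t ∉ (S : Set ℝ) :=
        compl_mem_ae_iff.2 (S.finite_toSet.measure_zero volume)
      filter_upwards [ae_restrict_of_ae hS0, ae_restrict_mem measurableSet_Ioc] with t ht ht'
      have hne : ν xb t ≠ c := by
        intro h
        apply ht
        rw [hS]
        exact ⟨Ioc_subset_Icc_self ht', h⟩
      have hcx : ContinuousAt (fun x => ν x t) xb := (aux_partial_fst hν xb t).continuousAt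
      change ∀ᶠ x in 𝓝 xb, (c ≤ ν x t ↔ c ≤ ν xb t)
      rcases lt_or_gt_of_ne hne with h | h
      · filter_upwards [hcx.eventually (gt_mem_nhds h)] with x hx
        exact ⟨fun h' => absurd h' hx.not_ge, fun h' => absurd h' h.not_ge⟩
      · filter_upwards [hcx.eventually (lt_mem_nhds h)] with x hx
        exact ⟨fun _ => h.le, fun _ => hx.le⟩)
  have g2 := aux_global hν (hc xb) h0 h1 S hS hd
  refine (g1.add g2).congr_of_eventuallyEq (Eventually.of_forall fun x => ?_)
  have i1 := aux_int hν (K := fun t => H x t - H xb t) ((hc x).sub (hc xb)) c x 0 1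
  have i2 := aux_int hν (hc xb) c x 0 1
  simp only [Pi.add_apply, intervalIntegral.integral_of_le zero_le_one]
  rw [← integral_add i1 i2]
  refine integral_congr_ae (Eventually.of_forall fun t => ?_)
  by_cases h : t ∈ {t | c ≤ ν x t}
  · simp [indicator_of_mem h]
  · simp [indicator_of_notMem h]

lemma aux_dec (N : ℕ) (R : ℕ → ℝ)
    (hRmono : ∀ i j : ℕ, i < j → j ≤ N → R i < R j)
    (f : ℕ → ℝ) (y v : ℝ)
    (hF : ∀ α : ℕ, 1 ≤ α → α ≤ N + 1 →
      (α = 1 ∨ R (α - 1) ≤ v) → (α = N + 1 ∨ v < R α) → y = f α) :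
    y = f 1 + ∑ i ∈ Finset.Icc 1 N, if R i ≤ v then f (i + 1) - f i else 0 := by
  have key : ∀ n ≤ N, ∃ k ≤ n, (k = 0 ∨ R k ≤ v) ∧ (k = n ∨ v < R (k + 1)) ∧
      f 1 + ∑ i ∈ Finset.Icc 1 n, (if R i ≤ v then f (i + 1) - f i else 0) = f (k + 1) := by
    intro n
    induction n with
    | zero => intro _; exact ⟨0, le_rfl, by simp, by simp, by simp⟩
    | succ n ih =>
      intro hn
      obtain ⟨k, hk, h1, h2, h3⟩ := ih (by omega)
      rw [Finset.sum_Icc_succ_top (by omega), ← add_assoc, h3]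
      by_cases hv : R (n + 1) ≤ v
      · have hkn : k = n := by
          by_contra hne
          have h2 := h2.resolve_left hne
          have := hRmono (k + 1) (n + 1) (by omega) hn
          linarith
        subst hkn
        exact ⟨k + 1, le_rfl, Or.inr hv, Or.inl rfl, by rw [if_pos hv]; ring⟩
      · refine ⟨k, by omega, h1, Or.inr ?_, by rw [if_neg hv]; ring⟩
        rcases h2 with rfl | h2
        · exact lt_of_not_ge hv
        · exact h2
  obtain ⟨k, hk, h1, h2, h3⟩ := key N le_rfl
  rw [h3]
  refine hF (k + 1) (by omega) (by omega) ?_ ?_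
  · rcases h1 with rfl | h1
    · exact Or.inl rfl
    · exact Or.inr h1
  · rcases h2 with rfl | h2
    · exact Or.inl rfl
    · exact Or.inr h2

end aux

theorem deriv_integral_piecewise_with_jumps
    (N : ℕ) (R : ℕ → ℝ) (hR0 : R 0 = 0)
    (hRmono : ∀ i j : ℕ, i < j → j ≤ N → R i < R j)
    (Fc : ℕ → ℝ → ℝ → ℝ)
    (hFc : ∀ α : ℕ, 1 ≤ α → α ≤ N + 1 →
      ContDiff ℝ 1 (fun q : ℝ × ℝ => Fc α q.1 q.2))
    (F : ℝ → ℝ → ℝ)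
    (hF : ∀ α : ℕ, 1 ≤ α → α ≤ N + 1 → ∀ v t : ℝ,
      (α = 1 ∨ R (α - 1) ≤ v) → (α = N + 1 ∨ v < R α) → F v t = Fc α v t)
    (ν : ℝ → ℝ → ℝ)
    (hν : ContDiff ℝ 1 (fun q : ℝ × ℝ => ν q.1 q.2))
    (xbar : ℝ)
    (hend : ∀ i : ℕ, 1 ≤ i → i ≤ N → ν xbar 0 ≠ R i ∧ ν xbar 1 ≠ R i)
    (T : ℕ → Finset ℝ)
    (hT : ∀ i : ℕ, 1 ≤ i → i ≤ N →
      (↑(T i) : Set ℝ) = {t : ℝ | t ∈ Set.Icc (0 : ℝ) 1 ∧ ν xbar t = R i})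
    (hTd : ∀ i : ℕ, 1 ≤ i → i ≤ N → ∀ t₀ ∈ T i, deriv (ν xbar) t₀ ≠ 0) :
    HasDerivAt (fun x : ℝ => ∫ t in (0 : ℝ)..1, F (ν x t) t)
      ((∫ t in (0 : ℝ)..1,
          deriv (fun v => F v t) (ν xbar t) * deriv (fun x' => ν x' t) xbar) +
        ∑ i ∈ Finset.Icc 1 N, ∑ t₀ ∈ T i,
          (Fc (i + 1) (R i) t₀ - Fc i (R i) t₀) *
            (deriv (fun x' => ν x' t₀) xbar / |deriv (ν xbar) t₀|)) xbar := by
  classical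
  have hdec : ∀ v t, F v t = Fc 1 v t +
      ∑ i ∈ Finset.Icc 1 N, if R i ≤ v then Fc (i + 1) v t - Fc i v t else 0 := fun v t =>
    aux_dec N R hRmono (fun α => Fc α v t) (F v t) v (fun α h1 h2 h3 h4 => hF α h1 h2 v t h3 h4)
  have hpair : ContDiff ℝ 1 (fun q : ℝ × ℝ => (ν q.1 q.2, q.2)) := hν.prodMk contDiff_snd
  have hG : ∀ i ∈ Finset.Icc 1 N,
      ContDiff ℝ 1 (fun q : ℝ × ℝ => (fun v t => Fc (i + 1) v t - Fc i v t) q.1 q.2) := by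
    intro i hi
    rw [Finset.mem_Icc] at hi
    exact (hFc (i + 1) (by omega) (by omega)).sub (hFc i (by omega) (by omega))
  have hF1 := hFc 1 le_rfl (by omega)
  have hH1 : ContDiff ℝ 1 (fun q : ℝ × ℝ => (fun x t => Fc 1 (ν x t) t) q.1 q.2) :=
    hF1.comp hpair
  have hHi : ∀ i ∈ Finset.Icc 1 N, ContDiff ℝ 1 (fun q : ℝ × ℝ =>
      (fun x t => Fc (i + 1) (ν x t) t - Fc i (ν x t) t) q.1 q.2) := fun i hi =>
    (hG i hi).comp hpair
  have d1 : HasDerivAt (fun x => ∫ t in (0 : ℝ)..1, Fc 1 (ν x t) t)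
      (∫ t in (0 : ℝ)..1, deriv (fun x => Fc 1 (ν x t) t) xbar) xbar := by
    have h := aux_smooth (H := fun x t => Fc 1 (ν x t) t) hH1 xbar (fun _ => Set.univ)
      (fun _ => MeasurableSet.univ) (Filter.Eventually.of_forall fun t => by simp)
    simp only [Set.indicator_univ] at h
    refine (h.add_const (∫ t in (0 : ℝ)..1, Fc 1 (ν xbar t) t)).congr_of_eventuallyEq
      (Filter.Eventually.of_forall fun x => ?_)
    have hc : ∀ x, Continuous (fun t => Fc 1 (ν x t) t) := fun x =>
      hH1.continuous.comp (by fun_prop : Continuous fun t : ℝ => (x, t))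
    simp only []
    rw [intervalIntegral.integral_sub ((hc x).intervalIntegrable _ _)
      ((hc xbar).intervalIntegrable _ _)]
    ring
  have d2 : ∀ i ∈ Finset.Icc 1 N, HasDerivAt (fun x => ∫ t in (0 : ℝ)..1,
        Set.indicator {t | R i ≤ ν x t} (fun t => Fc (i + 1) (ν x t) t - Fc i (ν x t) t) t)
      ((∫ t in (0 : ℝ)..1, Set.indicator {t | R i ≤ ν xbar t}
        (fun t => deriv (fun x => Fc (i + 1) (ν x t) t - Fc i (ν x t) t) xbar) t) +
        ∑ t₀ ∈ T i, (Fc (i + 1) (R i) t₀ - Fc i (R i) t₀) *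
            (deriv (fun x' => ν x' t₀) xbar / |deriv (ν xbar) t₀|)) xbar := by
    intro i hi
    have hi' := Finset.mem_Icc.1 hi
    have h := aux_comb hν (H := fun x t => Fc (i + 1) (ν x t) t - Fc i (ν x t) t) (hHi i hi)
      (hend i hi'.1 hi'.2).1 (hend i hi'.1 hi'.2).2 (T i) (hT i hi'.1 hi'.2) (hTd i hi'.1 hi'.2)
    convert h using 2
    refine Finset.sum_congr rfl fun t₀ ht => ?_
    have : ν xbar t₀ = R i := by
      have h2 : t₀ ∈ (T i : Set ℝ) := ht
      rw [hT i hi'.1 hi'.2] at h2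
      exact h2.2
    rw [this]
  have d3 := d1.add (HasDerivAt.fun_sum d2)
  have hcd : ∀ {H : ℝ → ℝ → ℝ}, ContDiff ℝ 1 (fun q : ℝ × ℝ => H q.1 q.2) →
      Continuous (fun t => deriv (fun x => H x t) xbar) := by
    intro H hH
    simp only [fun t => (aux_partial_fst hH xbar t).deriv]
    exact (aux_cont hH (1, 0)).comp (by fun_prop : Continuous fun t : ℝ => (xbar, t))
  have hcH : ∀ {H : ℝ → ℝ → ℝ}, ContDiff ℝ 1 (fun q : ℝ × ℝ => H q.1 q.2) → ∀ x,
      Continuous (H x) := fun hH x =>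
    hH.continuous.comp (by fun_prop : Continuous fun t : ℝ => (x, t))
  have hval : (∫ t in (0 : ℝ)..1,
        deriv (fun v => F v t) (ν xbar t) * deriv (fun x' => ν x' t) xbar) =
      (∫ t in (0 : ℝ)..1, deriv (fun x => Fc 1 (ν x t) t) xbar) +
      ∑ i ∈ Finset.Icc 1 N, ∫ t in (0 : ℝ)..1, Set.indicator {t | R i ≤ ν xbar t}
        (fun t => deriv (fun x => Fc (i + 1) (ν x t) t - Fc i (ν x t) t) xbar) t := by
    simp only [intervalIntegral.integral_of_le zero_le_one]
    have hi : ∀ i ∈ Finset.Icc 1 N, MeasureTheory.Integrable (Set.indicator {t | R i ≤ ν xbar t}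
        (fun t => deriv (fun x => Fc (i + 1) (ν x t) t - Fc i (ν x t) t) xbar))
        (MeasureTheory.volume.restrict (Set.Ioc (0 : ℝ) 1)) := fun i hi =>
      aux_int hν (hcd (H := fun x t => Fc (i + 1) (ν x t) t - Fc i (ν x t) t) (hHi i hi)) _ _ _ _
    have hi1 : MeasureTheory.IntegrableOn (fun t => deriv (fun x => Fc 1 (ν x t) t) xbar)
        (Set.Ioc (0 : ℝ) 1) := (hcd (H := fun x t => Fc 1 (ν x t) t) hH1).integrableOn_Ioc
    rw [← MeasureTheory.integral_finsetSum _ hi, ← MeasureTheory.integral_add hi1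
      (MeasureTheory.integrable_finsetSum _ hi)]
    refine MeasureTheory.integral_congr_ae ?_
    have hS0 : ∀ᵐ t : ℝ, t ∉ (((Finset.Icc 1 N).biUnion T : Finset ℝ) : Set ℝ) :=
      MeasureTheory.compl_mem_ae_iff.2 (Finset.finite_toSet _ |>.measure_zero _)
    filter_upwards [MeasureTheory.ae_restrict_of_ae hS0,
      MeasureTheory.ae_restrict_mem measurableSet_Ioc] with t ht ht'
    have hne : ∀ i ∈ Finset.Icc 1 N, ν xbar t ≠ R i := by
      intro i hi h
      apply ht
      rw [Finset.mem_coe, Finset.mem_biUnion]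
      refine ⟨i, hi, ?_⟩
      have hi' := Finset.mem_Icc.1 hi
      rw [← Finset.mem_coe, hT i hi'.1 hi'.2]
      exact ⟨Set.Ioc_subset_Icc_self ht', h⟩
    have hνx := aux_partial_fst hν xbar t
    have p1 := aux_partial_fst hF1 (ν xbar t) t
    have pi : ∀ i ∈ Finset.Icc 1 N, HasDerivAt
        (fun v => if R i ≤ v then Fc (i + 1) v t - Fc i v t else 0)
        (if R i ≤ ν xbar t then deriv (fun v => Fc (i + 1) v t - Fc i v t) (ν xbar t) else 0)
        (ν xbar t) := by
      intro i hi
      have q := aux_partial_fst (ν := fun v t => Fc (i + 1) v t - Fc i v t) (hG i hi) (ν xbar t) t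
      rcases lt_or_gt_of_ne (hne i hi) with h | h
      · rw [if_neg h.not_ge]
        refine (hasDerivAt_const _ (0 : ℝ)).congr_of_eventuallyEq ?_
        filter_upwards [gt_mem_nhds h] with v hv
        rw [if_neg (not_le.2 hv)]
      · rw [if_pos h.le]
        refine q.differentiableAt.hasDerivAt.congr_of_eventuallyEq ?_
        filter_upwards [lt_mem_nhds h] with v hv
        rw [if_pos (le_of_lt hv)]
    have pF : HasDerivAt (fun v => F v t) _ (ν xbar t) :=
      (p1.add (HasDerivAt.fun_sum pi)).congr_of_eventuallyEq
        (Filter.Eventually.of_forall fun v => hdec v t)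
    rw [pF.deriv, hνx.deriv, add_mul, Finset.sum_mul]
    congr 1
    · exact (p1.comp xbar hνx).deriv.symm
    · refine Finset.sum_congr rfl fun i hi => ?_
      by_cases h : R i ≤ ν xbar t
      · rw [if_pos h, Set.indicator_of_mem (show t ∈ {t | R i ≤ ν xbar t} from h)]
        have q := aux_partial_fst (ν := fun v t => Fc (i + 1) v t - Fc i v t) (hG i hi) (ν xbar t) t
        exact (q.differentiableAt.hasDerivAt.comp xbar hνx).deriv.symm
      · rw [if_neg h, Set.indicator_of_notMem (show t ∉ {t | R i ≤ ν xbar t} from h), zero_mul]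
  rw [hval, add_assoc, ← Finset.sum_add_distrib]
  refine d3.congr_of_eventuallyEq (Filter.Eventually.of_forall fun x => ?_)
  simp only [Pi.add_apply, intervalIntegral.integral_of_le zero_le_one]
  have hi : ∀ i ∈ Finset.Icc 1 N, MeasureTheory.Integrable (Set.indicator {t | R i ≤ ν x t}
      (fun t => Fc (i + 1) (ν x t) t - Fc i (ν x t) t))
      (MeasureTheory.volume.restrict (Set.Ioc (0 : ℝ) 1)) := fun i hi =>
    aux_int hν (hcH (H := fun x t => Fc (i + 1) (ν x t) t - Fc i (ν x t) t) (hHi i hi) x) _ _ _ _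
  have hi1 : MeasureTheory.IntegrableOn (fun t => Fc 1 (ν x t) t)
      (Set.Ioc (0 : ℝ) 1) := (hcH (H := fun x t => Fc 1 (ν x t) t) hH1 x).integrableOn_Ioc
  rw [← MeasureTheory.integral_finsetSum _ hi, ← MeasureTheory.integral_add hi1
    (MeasureTheory.integrable_finsetSum _ hi)]
  refine MeasureTheory.integral_congr_ae (Filter.Eventually.of_forall fun t => ?_)
  simp only [hdec, Set.indicator, Set.mem_ofPred_eq]
end
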